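/- Let n ≥ 1, let Λ be a full-rank lattice in ℝⁿ, let α, α', β, β' > 0 be reals, let c be a nonzero real, and let p be a natural number with 1 ≤ p ≤ n−1 and n ≠ 2p. Then Spec(Λ,α,β,p) = Spec(cΛ,α',β',p) (as functions ℝ → ℕ) if and only if α' = c²α and β' = c²β, where cΛ := {c·w : w ∈ Λ} is the rescaled lattice. -/

import Mathlib

open Real
open scoped RealInnerProductSpace

/-- The dual lattice `Λ* = {v : ∀ w ∈ Λ, ⟨v,w⟩ ∈ ℤ}` of a lattice `Λ ⊆ ℝⁿ`. -/
def dualLattice {n : ℕ} (L : Submodule ℤ (EuclideanSpace ℝ (Fin n))) :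
    Set (EuclideanSpace ℝ (Fin n)) :=
  {v | ∀ w ∈ L, ∃ m : ℤ, ⟪v, w⟫ = (m : ℝ)}

/-- The spectrum, with multiplicities, of the generalized Hodge-Laplace operator
`F_{αβ} = α dδ + β δd` on `p`-forms on the flat torus `ℝⁿ/Λ` (Theorem 3.9):
`x ↦ C(n-1,p-1)·#{l ∈ Λ* : 4π²α‖l‖² = x} + C(n-1,p)·#{l ∈ Λ* : 4π²β‖l‖² = x}`. -/
noncomputable def torusSpec {n : ℕ} (L : Submodule ℤ (EuclideanSpace ℝ (Fin n)))
    (α β : ℝ) (p : ℕ) : ℝ → ℕ := fun x =>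
  (n - 1).choose (p - 1) *
      Nat.card {l : EuclideanSpace ℝ (Fin n) //
        l ∈ dualLattice L ∧ 4 * π ^ 2 * α * ‖l‖ ^ 2 = x} +
    (n - 1).choose p *
      Nat.card {l : EuclideanSpace ℝ (Fin n) //
        l ∈ dualLattice L ∧ 4 * π ^ 2 * β * ‖l‖ ^ 2 = x}

/-- The rescaled lattice `cΛ = {c·w : w ∈ Λ}`. -/
noncomputable def rescaleLattice {n : ℕ} (c : ℝ) (L : Submodule ℤ (EuclideanSpace ℝ (Fin n))) :
    Submodule ℤ (EuclideanSpace ℝ (Fin n)) :=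
  L.map ((c • (LinearMap.id : EuclideanSpace ℝ (Fin n) →ₗ[ℝ]
    EuclideanSpace ℝ (Fin n))).restrictScalars ℤ)

/-!
The spectrum of `F_{αβ}` is `C(n-1,p-1)` times the spectrum of the Laplacian on functions dilated by
`α`, plus `C(n-1,p)` times the same spectrum dilated by `β`. On the positive reals, dilates are
translates for the multiplicative group structure. Because the Laplacian has a least positive
eigenvalue, distinct translates of its spectrum are linearly independent over `ℤ`: in a vanishing
combination, the smallest factor `s` alone contributes at `s` times the least eigenvalue. Hence the
spectrum determines the formal sum `C(n-1,p-1)[α] + C(n-1,p)[β]`, and since the two weights differ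
when `n ≠ 2p`, it determines `α` and `β`. Finally, rescaling `Λ` by `c` rescales `Λ*` by `c⁻¹`,
which amounts to dividing `α` and `β` by `c²`.
-/

section Translates

variable {R M Γ : Type*} [Ring R] [IsDomain R] [AddCommGroup M] [Module R M]
  [Module.IsTorsionFree R M] [CommGroup Γ] [LinearOrder Γ] [IsOrderedMonoid Γ]
  {f : Γ → M} {m : Γ}

theorem linearIndependent_translates (hm : IsLeast (Function.support f) m) :
    LinearIndependent R fun a x : Γ ↦ f (x / a) := by
  refine linearIndependent_iff.2 fun w hw ↦ ?_
  by_contra hw_ne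
  have hsupp : w.support.Nonempty := Finsupp.support_nonempty_iff.2 hw_ne
  let s := w.support.min' hsupp
  have hs : s ∈ w.support := w.support.min'_mem hsupp
  have vanish_of_ne : ∀ a ∈ w.support, a ≠ s → w a • f (m * s / a) = 0 := by
    intro a ha has
    have hsa : s < a := lt_of_le_of_ne (w.support.min'_le a ha) has.symm
    have hlt : m * s / a < m := div_lt_iff_lt_mul.2 (mul_lt_mul_right hsa m)
    rw [Function.notMem_support.1 fun hmem ↦ (hm.2 hmem).not_gt hlt, smul_zero]
  have eval_at_least : w s • f m = 0 := by
    have h := congrFun hw (m * s)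
    rw [Finsupp.linearCombination_apply, Finsupp.sum, Finset.sum_apply] at h
    simp only [Pi.smul_apply, Pi.zero_apply] at h
    rwa [Finset.sum_eq_single_of_mem s hs vanish_of_ne, mul_div_cancel_right] at h
  exact (smul_ne_zero (Finsupp.mem_support_iff.1 hs) hm.1) eval_at_least

theorem eq_and_eq_of_weighted_translates_eq (hm : IsLeast (Function.support f) m) {u v : R}
    (hu : u ≠ 0) (hv : v ≠ 0) (huv : u ≠ v) (huv_add : u + v ≠ 0) {a b a' b' : Γ}
    (h : ∀ x, u • f (x / a) + v • f (x / b) = u • f (x / a') + v • f (x / b')) :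
    a = a' ∧ b = b' := by
  have hsum : Finsupp.single a u + Finsupp.single b v =
      Finsupp.single a' u + Finsupp.single b' v := by
    apply linearIndependent_translates (R := R) hm
    simp only [map_add, Finsupp.linearCombination_single]
    exact funext h
  simpa only [huv, huv_add, false_and, or_false] using
    (Finsupp.single_add_single_eq_single_add_single hu hv).1 hsum

end Translates

theorem choose_eq_choose_succ_iff {n k : ℕ} (hk : k ≤ n) :
    n.choose k = n.choose (k + 1) ↔ n = 2 * k + 1 := by
  refine ⟨fun h ↦ ?_, fun h ↦ h ▸ (Nat.choose_symm_half k).symm⟩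
  have hratio : n.choose k * (k + 1) = n.choose k * (n - k) := by
    rw [← Nat.choose_succ_right_eq, ← h]
  have := Nat.eq_of_mul_eq_mul_left (Nat.choose_pos hk) hratio
  omega

theorem exists_mem_ne_zero_forall_norm_le {E : Type*} [NormedAddCommGroup E] [ProperSpace E]
    {M : AddSubgroup E} [DiscreteTopology M] (hM : M ≠ ⊥) :
    ∃ u ∈ M, u ≠ 0 ∧ ∀ v ∈ M, v ≠ 0 → ‖u‖ ≤ ‖v‖ := by
  obtain ⟨w, hw, hw_ne⟩ := M.bot_or_exists_ne_zero.resolve_left hM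
  let s := Metric.closedBall 0 ‖w‖ ∩ ((M : Set E) \ {0})
  have hs : s.Finite := (Metric.finite_isBounded_inter_isClosed DiscreteTopology.isDiscrete
    Metric.isBounded_closedBall AddSubgroup.isClosed_of_discrete).subset
      (Set.inter_subset_inter_right _ Set.sdiff_subset)
  obtain ⟨u, ⟨hu_ball, hu, hu_ne⟩, hu_min⟩ := Set.exists_min_image s norm hs
    ⟨w, mem_closedBall_zero_iff.2 le_rfl, hw, hw_ne⟩
  refine ⟨u, hu, hu_ne, fun v hv hv_ne ↦ ?_⟩
  rcases le_total ‖v‖ ‖w‖ with hle | hge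
  · exact hu_min v ⟨mem_closedBall_zero_iff.2 hle, hv, hv_ne⟩
  · exact (mem_closedBall_zero_iff.1 hu_ball).trans hge

theorem nondegenerate_innerₗ (E : Type*) [NormedAddCommGroup E] [InnerProductSpace ℝ E] :
    (innerₗ E).Nondegenerate :=
  (LinearMap.BilinForm.nondegenerate_iff _ isNonneg_inner.nonneg isSymm_inner).2
    fun _ ↦ inner_self_eq_zero (𝕜 := ℝ)

section Lattice

variable {n : ℕ} (L : Submodule ℤ (EuclideanSpace ℝ (Fin n)))

theorem mem_dualLattice_rescaleLattice {c : ℝ} {l : EuclideanSpace ℝ (Fin n)} :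
    l ∈ dualLattice (rescaleLattice c L) ↔ c • l ∈ dualLattice L := by
  simp [dualLattice, rescaleLattice, real_inner_smul_left, real_inner_smul_right]

theorem torusSpec_rescaleLattice {c : ℝ} (hc : c ≠ 0) (α β : ℝ) (p : ℕ) :
    torusSpec (rescaleLattice c L) α β p = torusSpec L (α / c ^ 2) (β / c ^ 2) p := by
  have card_eq (γ x : ℝ) :
      Nat.card {l // l ∈ dualLattice (rescaleLattice c L) ∧ 4 * π ^ 2 * γ * ‖l‖ ^ 2 = x} =
        Nat.card {l // l ∈ dualLattice L ∧ 4 * π ^ 2 * (γ / c ^ 2) * ‖l‖ ^ 2 = x} := by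
    refine Nat.card_congr ((Equiv.smulRight hc).subtypeEquiv fun l ↦ ?_)
    have hnorm : 4 * π ^ 2 * (γ / c ^ 2) * ‖c • l‖ ^ 2 = 4 * π ^ 2 * γ * ‖l‖ ^ 2 := by
      rw [norm_smul, mul_pow, Real.norm_eq_abs, sq_abs]
      field_simp
    simp only [mem_dualLattice_rescaleLattice, Equiv.smulRight_apply, hnorm]
  funext x
  simp only [torusSpec, card_eq]

/-- The multiplicity of `t` as an eigenvalue of the Laplacian on functions on the flat torus
`ℝⁿ/Λ`, namely the number of dual vectors `l` with `4π²‖l‖² = t`. The spectrum of `F_{αβ}` is a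
weighted sum of two dilates of this function. -/
noncomputable def laplaceMultiplicity (t : ℝ) : ℕ :=
  Nat.card {l : EuclideanSpace ℝ (Fin n) // l ∈ dualLattice L ∧ 4 * π ^ 2 * ‖l‖ ^ 2 = t}

theorem torusSpec_apply {α β : ℝ} (hα : α ≠ 0) (hβ : β ≠ 0) (p : ℕ) (x : ℝ) :
    torusSpec L α β p x =
      (n - 1).choose (p - 1) * laplaceMultiplicity L (x / α) +
        (n - 1).choose p * laplaceMultiplicity L (x / β) := by
  simp only [torusSpec, laplaceMultiplicity, eq_div_iff hα, eq_div_iff hβ, mul_right_comm]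

variable [DiscreteTopology L] [IsZLattice ℝ L]

theorem exists_basis_dualLattice_eq_span :
    ∃ b : Module.Basis (Fin n) ℝ (EuclideanSpace ℝ (Fin n)),
      dualLattice L = Submodule.span ℤ (Set.range b) := by
  have : Module.Finite ℤ L := ZLattice.module_finite ℝ L
  have : Module.Free ℤ L := ZLattice.module_free ℝ L
  have hrank : Module.finrank ℤ L = n := by rw [ZLattice.rank ℝ L, finrank_euclideanSpace_fin]
  let e := Module.finBasisOfFinrankEq ℤ L hrank
  refine ⟨LinearMap.BilinForm.dualBasis _ (nondegenerate_innerₗ _) (e.ofZLatticeBasis ℝ L), ?_⟩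
  rw [← LinearMap.BilinForm.dualSubmodule_span_of_basis, e.ofZLatticeBasis_span ℝ L]
  ext l
  simp [dualLattice, LinearMap.BilinForm.mem_dualSubmodule, Submodule.mem_one, eq_comm]

theorem finite_inter_dualLattice {s : Set (EuclideanSpace ℝ (Fin n))}
    (hs : Bornology.IsBounded s) : (s ∩ dualLattice L).Finite := by
  obtain ⟨b, hb⟩ := exists_basis_dualLattice_eq_span L
  exact hb ▸ ZSpan.setFinite_inter b hs

theorem exists_mem_dualLattice_ne_zero_forall_norm_le [NeZero n] :
    ∃ u ∈ dualLattice L, u ≠ 0 ∧ ∀ l ∈ dualLattice L, l ≠ 0 → ‖u‖ ≤ ‖l‖ := by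
  obtain ⟨b, hb⟩ := exists_basis_dualLattice_eq_span L
  rw [hb]
  let M := (Submodule.span ℤ (Set.range b)).toAddSubgroup
  have hb_mem : b 0 ∈ M := Submodule.subset_span (Set.mem_range_self 0)
  exact exists_mem_ne_zero_forall_norm_le (M := M) fun hM ↦
    b.ne_zero 0 ((AddSubgroup.eq_bot_iff_forall M).1 hM (b 0) hb_mem)

theorem laplaceMultiplicity_ne_zero_iff {t : ℝ} :
    laplaceMultiplicity L t ≠ 0 ↔ ∃ l ∈ dualLattice L, 4 * π ^ 2 * ‖l‖ ^ 2 = t := by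
  have hfinite : {l | l ∈ dualLattice L ∧ 4 * π ^ 2 * ‖l‖ ^ 2 = t}.Finite := by
    refine (finite_inter_dualLattice L
      (Metric.isBounded_closedBall (x := 0) (r := √(t / (4 * π ^ 2))))).subset ?_
    rintro l ⟨hl, rfl⟩
    refine ⟨mem_closedBall_zero_iff.2 (Real.le_sqrt_of_sq_le ?_), hl⟩
    rw [mul_div_cancel_left₀ _ (by positivity)]
  rw [laplaceMultiplicity, Nat.card_ne_zero, nonempty_subtype]
  exact and_iff_left hfinite.to_subtype

theorem exists_isLeast_support_laplaceMultiplicity [NeZero n] :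
    ∃ m, IsLeast (Function.support fun t : {t : ℝ // 0 < t} ↦ laplaceMultiplicity L t) m := by
  obtain ⟨u, hu, hu_ne, hu_min⟩ := exists_mem_dualLattice_ne_zero_forall_norm_le L
  refine ⟨⟨4 * π ^ 2 * ‖u‖ ^ 2, by positivity⟩,
    (laplaceMultiplicity_ne_zero_iff L).2 ⟨u, hu, rfl⟩, ?_⟩
  rintro ⟨t, ht⟩ ht_supp
  obtain ⟨l, hl, rfl⟩ := (laplaceMultiplicity_ne_zero_iff L).1 ht_supp
  have hl_ne : l ≠ 0 := by
    rintro rfl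
    simp at ht
  have hle := hu_min l hl hl_ne
  rw [Subtype.mk_le_mk]
  gcongr

theorem torusSpec_eq_torusSpec_iff {α β α' β' : ℝ} (hα : 0 < α) (hβ : 0 < β) (hα' : 0 < α')
    (hβ' : 0 < β') {p : ℕ} (hp : 1 ≤ p) (hpn : p ≤ n - 1) (hn2p : n ≠ 2 * p) :
    torusSpec L α β p = torusSpec L α' β' p ↔ α = α' ∧ β = β' := by
  refine ⟨fun h ↦ ?_, by rintro ⟨rfl, rfl⟩; rfl⟩
  have : NeZero n := ⟨by omega⟩
  obtain ⟨m, hm⟩ := exists_isLeast_support_laplaceMultiplicity L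
  let f : {t : ℝ // 0 < t} → ℤ := fun t ↦ laplaceMultiplicity L t
  have hf : IsLeast (Function.support f) m := by
    simpa only [f, Function.support, Nat.cast_ne_zero] using hm
  obtain ⟨q, rfl⟩ := Nat.exists_eq_add_of_le' hp
  let A : ℤ := (n - 1).choose q
  let B : ℤ := (n - 1).choose (q + 1)
  have hA : 0 < A := Nat.cast_pos.2 (Nat.choose_pos (by omega))
  have hB : 0 < B := Nat.cast_pos.2 (Nat.choose_pos hpn)
  have hAB : A ≠ B := by
    simp only [A, B, Ne, Nat.cast_inj, choose_eq_choose_succ_iff (show q ≤ n - 1 by omega)]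
    omega
  have hdilates (x : {t : ℝ // 0 < t}) :
      A • f (x / ⟨α, hα⟩) + B • f (x / ⟨β, hβ⟩) =
        A • f (x / ⟨α', hα'⟩) + B • f (x / ⟨β', hβ'⟩) := by
    have hx := congrArg (Nat.cast : ℕ → ℤ) (congrFun h x)
    simp only [torusSpec_apply L hα.ne' hβ.ne', torusSpec_apply L hα'.ne' hβ'.ne',
      Nat.cast_add, Nat.cast_mul] at hx
    exact hx
  simpa only [Subtype.mk.injEq] using
    eq_and_eq_of_weighted_translates_eq hf hA.ne' hB.ne' hAB (add_pos hA hB).ne' hdilates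

end Lattice

/-- Corollary 3.19 (case `n ≠ 2p`): `F_{αβ,p}` on `ℝⁿ/Λ` and `F_{α'β',p}` on `ℝⁿ/cΛ` are
isospectral iff `(α', β') = (c²α, c²β)`. -/
theorem stmt_10 (n : ℕ) (hn : 1 ≤ n)
    (L : Submodule ℤ (EuclideanSpace ℝ (Fin n)))
    [DiscreteTopology L] [IsZLattice ℝ L]
    (α α' β β' : ℝ) (hα : 0 < α) (hα' : 0 < α') (hβ : 0 < β) (hβ' : 0 < β')
    (c : ℝ) (hc : c ≠ 0)
    (p : ℕ) (hp : 1 ≤ p) (hpn : p ≤ n - 1) (hn2p : n ≠ 2 * p) :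
    torusSpec L α β p = torusSpec (rescaleLattice c L) α' β' p ↔
      α' = c ^ 2 * α ∧ β' = c ^ 2 * β := by
  have hc2 : 0 < c ^ 2 := by positivity
  rw [torusSpec_rescaleLattice L hc,
    torusSpec_eq_torusSpec_iff L hα hβ (div_pos hα' hc2) (div_pos hβ' hc2) hp hpn hn2p]
  exact and_congr (by rw [eq_div_iff hc2.ne', mul_comm, eq_comm])
    (by rw [eq_div_iff hc2.ne', mul_comm, eq_comm])
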